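/- arXiv:1309.5724 — 8 statements merged into one kernel-verified Lean document; each statement's English description precedes it below -/
import Mathlib

section
/- A finite connected simple graph G is bipartite if and only if G has a cut-partition, i.e., a set of cuts of G that partitions the edge set of G. -/
/-- A cut of a connected simple graph: an inclusion-minimal set of edges whose
removal disconnects the graph. -/
def IsCut {V : Type*} (G : SimpleGraph V) (C : Set (Sym2 V)) : Prop :=
  C ⊆ G.edgeSet ∧ ¬ (G.deleteEdges C).Connected ∧
    ∀ C' : Set (Sym2 V), C' ⊂ C → (G.deleteEdges C').Connected

/-- A cut-partition: a set of cuts partitioning the edge set. -/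
def IsCutPartition {V : Type*} (G : SimpleGraph V) (𝒞 : Set (Set (Sym2 V))) : Prop :=
  (∀ C ∈ 𝒞, IsCut G C) ∧ 𝒞.PairwiseDisjoint id ∧ ⋃₀ 𝒞 = G.edgeSet

/-- The edges of `G` with exactly one end in `S`. -/
def edgeCoboundary {V : Type*} (G : SimpleGraph V) (S : Set V) : Set (Sym2 V) :=
  {e | e ∈ G.edgeSet ∧ ∃ u ∈ S, ∃ v ∉ S, e = s(u, v)}

theorem mk_mem_edgeCoboundary {V : Type*} {G : SimpleGraph V} {S : Set V} {u v : V} :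
    s(u, v) ∈ edgeCoboundary G S ↔ G.Adj u v ∧ ¬ (u ∈ S ↔ v ∈ S) := by
  simp only [edgeCoboundary, Set.mem_ofPred_eq, SimpleGraph.mem_edgeSet]
  refine and_congr_right fun _ => ⟨?_, fun h => ?_⟩
  · rintro ⟨a, ha, b, hb, h⟩
    rcases Sym2.eq_iff.1 h with ⟨rfl, rfl⟩ | ⟨rfl, rfl⟩ <;> tauto
  · by_cases hu : u ∈ S
    · exact ⟨u, hu, v, by tauto, rfl⟩
    · exact ⟨v, by tauto, u, hu, Sym2.eq_swap⟩

/-- Deleting a coboundary separates the vertices inside from those outside. -/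
theorem not_connected_deleteEdges_edgeCoboundary {V : Type*} {G : SimpleGraph V} {S : Set V}
    {u v : V} (hu : u ∈ S) (hv : v ∉ S) :
    ¬ (G.deleteEdges (edgeCoboundary G S)).Connected := by
  intro h
  obtain ⟨p⟩ := h.preconnected u v
  obtain ⟨d, -, hd, hd'⟩ := p.exists_boundary_dart S hu hv
  have hadj := SimpleGraph.deleteEdges_adj.1 d.adj
  exact hadj.2 (mk_mem_edgeCoboundary.2 ⟨hadj.1, by tauto⟩)

/-- Every cut of a nonempty graph consists of the edges leaving one of its sides. -/
theorem IsCut.exists_eq_edgeCoboundary {V : Type*} [Nonempty V] {G : SimpleGraph V}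
    {C : Set (Sym2 V)} (hC : IsCut G C) : ∃ S : Set V, C = edgeCoboundary G S := by
  obtain ⟨u, v, huv⟩ : ∃ u v, ¬ (G.deleteEdges C).Reachable u v := by
    by_contra! h
    exact hC.2.1 ⟨h⟩
  let S : Set V := {w | (G.deleteEdges C).Reachable u w}
  have hsub : edgeCoboundary G S ⊆ C := by
    rintro _ ⟨he, a, ha, b, hb, rfl⟩
    by_contra hab
    exact hb (SimpleGraph.Reachable.trans ha
      (SimpleGraph.deleteEdges_adj.2 ⟨he, hab⟩ : (G.deleteEdges C).Adj a b).reachable)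
  refine ⟨S, by_contra fun hne => ?_⟩
  exact not_connected_deleteEdges_edgeCoboundary (S := S) (SimpleGraph.Reachable.refl u) huv
    (hC.2.2 _ (hsub.ssubset_of_ne (Ne.symm hne)))

/-- In a finite graph, a set of edges whose deletion disconnects the graph contains a cut. -/
theorem exists_isCut_subset {V : Type*} [Finite V] {G : SimpleGraph V} {D : Set (Sym2 V)}
    (hD : D ⊆ G.edgeSet) (hdis : ¬ (G.deleteEdges D).Connected) : ∃ C ⊆ D, IsCut G C := by
  obtain ⟨C, hCD, hC⟩ := (Set.toFinite {C | ¬ (G.deleteEdges C).Connected}).exists_le_minimal hdis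
  exact ⟨C, hCD, hCD.trans hD, hC.prop, fun C' h => by_contra fun h' => hC.not_prop_of_lt h h'⟩

theorem edgeCoboundary_sdiff {V : Type*} (G : SimpleGraph V) {S T : Set V}
    (h : edgeCoboundary G T ⊆ edgeCoboundary G S) :
    edgeCoboundary G S \ edgeCoboundary G T = edgeCoboundary G (symmDiff S T) := by
  ext e
  induction e with
  | _ u v =>
    have h' := @h s(u, v)
    simp only [Set.mem_sdiff, mk_mem_edgeCoboundary, Set.mem_symmDiff] at h' ⊢
    tauto

/-- In a finite connected graph every coboundary is a disjoint union of cuts. -/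
theorem exists_cuts_sUnion_eq_edgeCoboundary {V : Type*} [Finite V] {G : SimpleGraph V}
    (hconn : G.Connected) (S : Set V) : ∃ 𝒞 : Set (Set (Sym2 V)),
      (∀ C ∈ 𝒞, IsCut G C) ∧ 𝒞.PairwiseDisjoint id ∧ ⋃₀ 𝒞 = edgeCoboundary G S := by
  have := hconn.nonempty
  induction hn : (edgeCoboundary G S).ncard using Nat.strong_induction_on generalizing S with
  | _ n ih =>
    by_cases hdis : (G.deleteEdges (edgeCoboundary G S)).Connected
    · refine ⟨∅, by simp, by simp, ?_⟩
      rw [Set.sUnion_empty, eq_comm, Set.eq_empty_iff_forall_notMem]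
      rintro _ ⟨-, u, hu, v, hv, rfl⟩
      exact not_connected_deleteEdges_edgeCoboundary hu hv hdis
    obtain ⟨B, hBS, hB⟩ := exists_isCut_subset (fun _ he => he.1) hdis
    obtain ⟨T, rfl⟩ := hB.exists_eq_edgeCoboundary
    have hne : (edgeCoboundary G T).Nonempty := by
      rw [Set.nonempty_iff_ne_empty]
      intro h
      apply hB.2.1
      rwa [h, SimpleGraph.deleteEdges_empty]
    have hdiff := edgeCoboundary_sdiff G hBS
    have hlt : (edgeCoboundary G (symmDiff S T)).ncard < n := by
      rw [← hdiff, ← hn]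
      refine Set.ncard_lt_ncard (Set.sdiff_subset.ssubset_of_ne fun h => ?_)
      obtain ⟨e, he⟩ := hne
      exact (h.symm ▸ hBS he : e ∈ edgeCoboundary G S \ edgeCoboundary G T).2 he
    obtain ⟨𝒞, hcut, hdisj, hU⟩ := ih _ hlt _ rfl
    rw [← hdiff] at hU
    refine ⟨insert (edgeCoboundary G T) 𝒞, ?_, ?_, ?_⟩
    · rintro C (rfl | hC)
      exacts [hB, hcut C hC]
    · refine hdisj.insert fun C hC _ => ?_
      exact Set.disjoint_sdiff_right.mono_right (hU ▸ Set.subset_sUnion_of_mem hC)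
    · rw [Set.sUnion_insert, hU, Set.union_sdiff_cancel hBS]

/-- Colour each vertex by the parity of the number of cuts of which it lies on a chosen side. -/
theorem IsCutPartition.colorable_two {V : Type*} [Finite V] [Nonempty V] {G : SimpleGraph V}
    {𝒞 : Set (Set (Sym2 V))} (h : IsCutPartition G 𝒞) : G.Colorable 2 := by
  classical
  obtain ⟨hcut, hdisj, hU⟩ := h
  choose! S hS using fun C hC => (hcut C hC).exists_eq_edgeCoboundary
  let 𝒞' : Finset (Set (Sym2 V)) := 𝒞.toFinite.toFinset
  let color : V → ZMod 2 := fun v => ∑ C ∈ 𝒞', if v ∈ S C then 1 else 0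
  have valid : ∀ {u v : V}, G.Adj u v → color u ≠ color v := by
    intro u v huv heq
    obtain ⟨C, hC, huvC⟩ : s(u, v) ∈ ⋃₀ 𝒞 := hU ▸ huv
    have hother : ∀ D ∈ 𝒞'.erase C,
        (if u ∈ S D then 1 else 0 : ZMod 2) = if v ∈ S D then 1 else 0 := by
      intro D hD
      obtain ⟨hDC, hD⟩ := Finset.mem_erase.1 hD
      replace hD : D ∈ 𝒞 := 𝒞.toFinite.mem_toFinset.1 hD
      have hnot : s(u, v) ∉ edgeCoboundary G (S D) := by
        rw [← hS D hD]
        exact fun huvD => Set.disjoint_left.1 (hdisj hD hC hDC) huvD huvC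
      rw [mk_mem_edgeCoboundary, not_and, not_not] at hnot
      simp only [hnot huv]
    have hC' : C ∈ 𝒞' := 𝒞.toFinite.mem_toFinset.2 hC
    simp only [color] at heq
    rw [← Finset.add_sum_erase _ _ hC', ← Finset.add_sum_erase _ _ hC',
      Finset.sum_congr rfl hother, add_left_inj] at heq
    rw [hS C hC, mk_mem_edgeCoboundary] at huvC
    by_cases hu : u ∈ S C <;> by_cases hv : v ∈ S C <;> simp [hu, hv] at heq huvC
  simpa using (SimpleGraph.Coloring.mk color valid).colorable

/-- A finite connected simple graph is bipartite iff it has a cut-partition. -/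
theorem bipartite_iff_exists_cutPartition {V : Type*} [Fintype V] (G : SimpleGraph V)
    (hconn : G.Connected) :
    G.Colorable 2 ↔ ∃ 𝒞 : Set (Set (Sym2 V)), IsCutPartition G 𝒞 := by
  have := hconn.nonempty
  refine ⟨fun ⟨c⟩ => ?_, fun ⟨_, h⟩ => h.colorable_two⟩
  obtain ⟨𝒞, hcut, hdisj, hU⟩ := exists_cuts_sUnion_eq_edgeCoboundary hconn {v | c v = 0}
  refine ⟨𝒞, hcut, hdisj, hU.trans ?_⟩
  ext e
  induction e with
  | _ u v =>
    rw [mk_mem_edgeCoboundary, SimpleGraph.mem_edgeSet, and_iff_left_iff_imp]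
    intro huv
    have := c.valid huv
    simp only [Set.mem_ofPred_eq]
    omega
end

section
/- A finite connected simple graph G is a partial cube if and only if G admits a cut-partition 𝒞 such that no shortest path in G uses two edges of the same cut C ∈ 𝒞. -/
open Classical in
/-- The number of edges of a walk (with multiplicity) belonging to a given edge set. -/
noncomputable def cutUse {V : Type*} (G : SimpleGraph V) {u w : V} (p : G.Walk u w)
    (C : Set (Sym2 V)) : ℕ :=
  p.edges.countP fun e => decide (e ∈ C)

/-- A partial cube: a graph admitting an isometric embedding into a hypercube. -/
def IsPartialCube {V : Type*} (G : SimpleGraph V) : Prop :=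
  ∃ (d : ℕ) (φ : V → Fin d → Bool), ∀ u v : V, G.dist u v = hammingDist (φ u) (φ v)

open Classical in
theorem cutUse_cons {V : Type*} {G : SimpleGraph V} {u v w : V} (h : G.Adj u v)
    (p : G.Walk v w) (C : Set (Sym2 V)) :
    cutUse G (SimpleGraph.Walk.cons h p) C = cutUse G p C + if s(u, v) ∈ C then 1 else 0 := by
  simp [cutUse, List.countP_cons]

/-- If every edge lies in exactly one member of the family, the uses add up to the length. -/
theorem sum_cutUse_eq_length {V ι : Type*} [Fintype ι] {G : SimpleGraph V}
    {C : ι → Set (Sym2 V)} (hC : ∀ e ∈ G.edgeSet, ∃! i, e ∈ C i) {u w : V} (p : G.Walk u w) :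
    ∑ i, cutUse G p (C i) = p.length := by
  classical
  induction p with
  | nil => simp [cutUse]
  | @cons a b c h p ih =>
    obtain ⟨i, hi, huniq⟩ := hC s(a, b) h
    have hmem : ∀ j, s(a, b) ∈ C j ↔ j = i := fun j => ⟨huniq j, fun hj => hj ▸ hi⟩
    simp only [cutUse_cons, Finset.sum_add_distrib, ih, hmem]
    simp

/-- A walk uses the edges separated by a two-colouring an odd number of times
iff its ends have different colours. -/
theorem cutUse_mod_two {V : Type*} {G : SimpleGraph V} {C : Set (Sym2 V)} {f : V → Bool}
    (hf : ∀ a b, G.Adj a b → (s(a, b) ∈ C ↔ f a ≠ f b)) {u w : V} (p : G.Walk u w) :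
    cutUse G p C % 2 = if f u ≠ f w then 1 else 0 := by
  induction p with
  | nil => simp [cutUse]
  | @cons a b c h p ih =>
    rw [cutUse_cons, Nat.add_mod, ih]
    simp only [hf a b h]
    cases f a <;> cases f b <;> cases f c <;> rfl

/-- A function that is constant along edges agrees on reachable vertices. -/
theorem eq_of_reachable_of_forall_adj {V α : Type*} {G : SimpleGraph V} {f : V → α}
    (hf : ∀ a b, G.Adj a b → f a = f b) {u w : V} (h : G.Reachable u w) : f u = f w := by
  obtain ⟨p⟩ := h
  induction p with
  | nil => rfl
  | cons hab _ ih => exact (hf _ _ hab).trans ih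

/-- A cut is the set of edges joining its two sides. -/
theorem IsCut.exists_sides {V : Type*} {G : SimpleGraph V} (hconn : G.Connected)
    {C : Set (Sym2 V)} (hC : IsCut G C) :
    ∃ f : V → Bool, ∀ a b, G.Adj a b → (s(a, b) ∈ C ↔ f a ≠ f b) := by
  classical
  obtain ⟨-, hdis, hmin⟩ := hC
  have := hconn.nonempty
  obtain ⟨x, y, hxy⟩ : ∃ x y, ¬ (G.deleteEdges C).Reachable x y := by
    by_contra! hall
    exact hdis ⟨hall⟩
  let f : V → Bool := fun v => decide ((G.deleteEdges C).Reachable x v)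
  have hsame : ∀ a b, (G.deleteEdges C).Adj a b → f a = f b := fun a b hab =>
    decide_eq_decide.2 ⟨fun h => h.trans hab.reachable, fun h => h.trans hab.symm.reachable⟩
  refine ⟨f, fun a b hab => ⟨fun he heq => ?_, fun hne => ?_⟩⟩
  · have hlt : C \ {s(a, b)} ⊂ C := Set.sdiff_singleton_ssubset.2 he
    have hfxy : f x = f y := by
      refine eq_of_reachable_of_forall_adj (fun c d hcd => ?_) ((hmin _ hlt).preconnected x y)
      rw [SimpleGraph.deleteEdges_adj] at hcd
      by_cases hcdC : s(c, d) ∈ C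
      · have hcd' : s(c, d) = s(a, b) := by
          by_contra hne
          exact hcd.2 ⟨hcdC, hne⟩
        rcases Sym2.eq_iff.1 hcd' with ⟨rfl, rfl⟩ | ⟨rfl, rfl⟩
        · exact heq
        · exact heq.symm
      · exact hsame c d (SimpleGraph.deleteEdges_adj.2 ⟨hcd.1, hcdC⟩)
    exact hxy ((decide_eq_decide.1 hfxy).1 (SimpleGraph.Reachable.refl x))
  · by_contra he
    exact hne (hsame a b (SimpleGraph.deleteEdges_adj.2 ⟨hab, he⟩))

/-- If every geodesic uses the edges between two colour classes at most once and such edges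
exist, then they form a cut. -/
theorem isCut_of_cutUse_le_one {V : Type*} {G : SimpleGraph V} (hconn : G.Connected)
    {C : Set (Sym2 V)} (hsub : C ⊆ G.edgeSet) (hne : C.Nonempty) {f : V → Bool}
    (hf : ∀ a b, G.Adj a b → (s(a, b) ∈ C ↔ f a ≠ f b))
    (huse : ∀ (u w : V) (p : G.Walk u w), p.length = G.dist u w → cutUse G p C ≤ 1) :
    IsCut G C := by
  have := hconn.nonempty
  refine ⟨hsub, fun hcon => ?_, fun C' hC' => ?_⟩
  · obtain ⟨⟨a, b⟩, he⟩ := hne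
    refine (hf a b (hsub he)).1 he (eq_of_reachable_of_forall_adj (fun c d hcd => ?_)
      (hcon.preconnected a b))
    rw [SimpleGraph.deleteEdges_adj] at hcd
    by_contra hcd'
    exact hcd.2 ((hf c d hcd.1).2 hcd')
  · obtain ⟨hle, e, he, he'⟩ := Set.ssubset_iff_exists.1 hC'
    have hside : ∀ u w, f u = f w → (G.deleteEdges C').Reachable u w := by
      intro u w huw
      obtain ⟨p, hp⟩ := hconn.exists_walk_length_eq_dist u w
      have hzero : cutUse G p C = 0 := by
        have h1 := huse u w p hp
        have h2 := cutUse_mod_two hf p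
        simp only [huw, ne_eq, not_true_eq_false, if_false] at h2
        omega
      refine ⟨p.toDeleteEdges C' fun e hep heC' => ?_⟩
      simp only [cutUse, List.countP_eq_zero, decide_eq_true_eq] at hzero
      exact hzero e hep (hle heC')
    obtain ⟨a, b⟩ := e
    have hab : (G.deleteEdges C').Reachable a b :=
      (SimpleGraph.deleteEdges_adj.2 ⟨hsub he, he'⟩ : (G.deleteEdges C').Adj a b).reachable
    have hfab := (hf a b (hsub he)).1 he
    have hreach : ∀ v, (G.deleteEdges C').Reachable a v := by
      intro v
      by_cases hv : f a = f v
      · exact hside a v hv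
      · refine hab.trans (hside b v ?_)
        revert hfab hv
        cases f a <;> cases f b <;> cases f v <;> simp
    exact ⟨fun u w => (hreach u).symm.trans (hreach w)⟩

theorem hammingDist_eq_sum {ι : Type*} [Fintype ι] (x y : ι → Bool) :
    hammingDist x y = ∑ i, if x i ≠ y i then 1 else 0 := by
  simp only [hammingDist, Finset.card_filter]

theorem IsCutPartition.existsUnique_mem {V : Type*} {G : SimpleGraph V}
    {𝒞 : Set (Set (Sym2 V))} (h : IsCutPartition G 𝒞) :
    ∀ e ∈ G.edgeSet, ∃! C : 𝒞, e ∈ (C : Set (Sym2 V)) := by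
  intro e he
  rw [← h.2.2] at he
  obtain ⟨C, hC, heC⟩ := he
  refine ⟨⟨C, hC⟩, heC, fun D heD => Subtype.ext ?_⟩
  exact h.2.1.elim_set D.2 hC e heD heC

theorem isPartialCube_of_cutPartition {V : Type*} [Fintype V] {G : SimpleGraph V}
    (hconn : G.Connected) {𝒞 : Set (Set (Sym2 V))} (h𝒞 : IsCutPartition G 𝒞)
    (huse : ∀ (u w : V) (p : G.Walk u w), p.length = G.dist u w →
      ∀ C ∈ 𝒞, cutUse G p C ≤ 1) : IsPartialCube G := by
  classical
  have : Fintype 𝒞 := Fintype.ofFinite 𝒞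
  choose f hf using fun C : 𝒞 => (h𝒞.1 C C.2).exists_sides hconn
  let σ := Fintype.equivFin 𝒞
  refine ⟨Fintype.card 𝒞, fun v i => f (σ.symm i) v, fun u w => ?_⟩
  obtain ⟨p, hp⟩ := hconn.exists_walk_length_eq_dist u w
  rw [hammingDist_eq_sum, Equiv.sum_comp σ.symm fun C => if f C u ≠ f C w then 1 else 0, ← hp,
    ← sum_cutUse_eq_length h𝒞.existsUnique_mem p]
  refine Finset.sum_congr rfl fun C _ => ?_
  rw [← cutUse_mod_two (hf C) p]
  exact (Nat.mod_eq_of_lt (Nat.lt_succ_of_le (huse u w p hp C C.2))).symm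

/-- The edges of `G` whose ends receive different colours. -/
def bichromaticEdges {V : Type*} (G : SimpleGraph V) (f : V → Bool) : Set (Sym2 V) :=
  {e | e ∈ G.edgeSet ∧ ¬ (e.map f).IsDiag}

theorem mem_bichromaticEdges {V : Type*} {G : SimpleGraph V} (f : V → Bool) (a b : V)
    (h : G.Adj a b) : s(a, b) ∈ bichromaticEdges G f ↔ f a ≠ f b := by
  simp [bichromaticEdges, h]

theorem IsPartialCube.exists_cutPartition {V : Type*} {G : SimpleGraph V}
    (hconn : G.Connected) (h : IsPartialCube G) :
    ∃ 𝒞 : Set (Set (Sym2 V)), IsCutPartition G 𝒞 ∧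
      ∀ (u w : V) (p : G.Walk u w), p.length = G.dist u w →
        ∀ C ∈ 𝒞, cutUse G p C ≤ 1 := by
  obtain ⟨d, φ, hφ⟩ := h
  let C : Fin d → Set (Sym2 V) := fun i => bichromaticEdges G fun v => φ v i
  have hC : ∀ i a b, G.Adj a b → (s(a, b) ∈ C i ↔ φ a i ≠ φ b i) := fun i a b =>
    mem_bichromaticEdges (fun v => φ v i) a b
  have huniq : ∀ e ∈ G.edgeSet, ∃! i, e ∈ C i := by
    rintro ⟨a, b⟩ (hab : G.Adj a b)
    have hone := hφ a b
    rw [SimpleGraph.dist_eq_one_iff_adj.2 hab, hammingDist, eq_comm, Finset.card_eq_one] at hone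
    obtain ⟨i, hi⟩ := hone
    have hmem : ∀ j, s(a, b) ∈ C j ↔ j = i := fun j => by
      rw [hC j a b hab, ← Finset.mem_singleton, ← hi]
      simp
    exact ⟨i, (hmem i).2 rfl, fun j => (hmem j).1⟩
  have huse : ∀ i (u w : V) (p : G.Walk u w), p.length = G.dist u w →
      cutUse G p (C i) ≤ 1 := by
    intro i u w p hp
    have hmod : ∀ j, cutUse G p (C j) % 2 = if φ u j ≠ φ w j then 1 else 0 := fun j =>
      cutUse_mod_two (hC j) p
    have hsum : ∑ j, cutUse G p (C j) % 2 = ∑ j, cutUse G p (C j) := by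
      rw [sum_cutUse_eq_length huniq p, hp, hφ, hammingDist_eq_sum]
      exact Finset.sum_congr rfl fun j _ => hmod j
    have hi := (Finset.sum_eq_sum_iff_of_le fun j _ => Nat.mod_le _ _).1 hsum i
      (Finset.mem_univ i)
    omega
  refine ⟨{D | D.Nonempty ∧ ∃ i, C i = D}, ⟨?_, ?_, ?_⟩, ?_⟩
  · rintro _ ⟨hne, i, rfl⟩
    exact isCut_of_cutUse_le_one hconn (fun e he => he.1) hne (hC i) (huse i)
  · rintro _ ⟨-, i, rfl⟩ _ ⟨-, j, rfl⟩ hij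
    refine Set.disjoint_left.2 fun e hei hej => hij ?_
    rw [(huniq e hei.1).unique hei hej]
  · ext e
    refine ⟨?_, fun he => ?_⟩
    · rintro ⟨_, ⟨-, i, rfl⟩, he⟩
      exact he.1
    · obtain ⟨i, hi, -⟩ := huniq e he
      exact ⟨C i, ⟨⟨e, hi⟩, i, rfl⟩, hi⟩
  · rintro u w p hp _ ⟨-, i, rfl⟩
    exact huse i u w p hp

/-- A finite connected simple graph is a partial cube iff it admits a cut-partition
such that no shortest path uses two edges of the same cut. -/
theorem isPartialCube_iff_cutPartition {V : Type*} [Fintype V] (G : SimpleGraph V)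
    (hconn : G.Connected) :
    IsPartialCube G ↔ ∃ 𝒞 : Set (Set (Sym2 V)), IsCutPartition G 𝒞 ∧
      ∀ (u w : V) (p : G.Walk u w), p.length = G.dist u w →
        ∀ C ∈ 𝒞, cutUse G p C ≤ 1 :=
  ⟨fun h => h.exists_cutPartition hconn,
    fun ⟨_, h𝒞, huse⟩ => isPartialCube_of_cutPartition hconn h𝒞 huse⟩
end

section
/- Let G be a finite connected simple graph with an isometric embedding φ : V(G) → (Fin d → Bool) into the hypercube (graph distance in G equals Hamming distance of images). For each coordinate i ∈ Fin d, let C_i be the set of edges {u,w} of G with φ(u) i ≠ φ(w) i. Then every nonempty C_i is a cut of G (an inclusion-minimal edge set whose removal disconnects G), and the nonempty sets C_i form a cut-partition of G. -/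
/-- The set of edges of `G` whose endpoints differ in coordinate `i` of the embedding `φ`. -/
def coordCut {V : Type*} (G : SimpleGraph V) {d : ℕ} (φ : V → Fin d → Bool) (i : Fin d) :
    Set (Sym2 V) :=
  {e : Sym2 V | e ∈ G.edgeSet ∧ ∃ u w : V, e = s(u, w) ∧ φ u i ≠ φ w i}

theorem mk_mem_coordCut {V : Type*} {G : SimpleGraph V} {d : ℕ} {φ : V → Fin d → Bool}
    {i : Fin d} {u v : V} : s(u, v) ∈ coordCut G φ i ↔ G.Adj u v ∧ φ u i ≠ φ v i := by
  constructor
  · rintro ⟨h, a, b, hab, hne⟩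
    refine ⟨h, ?_⟩
    rcases Sym2.eq_iff.1 hab with ⟨rfl, rfl⟩ | ⟨rfl, rfl⟩
    · exact hne
    · exact hne.symm
  · rintro ⟨h, hne⟩
    exact ⟨h, u, v, rfl, hne⟩

/-- Hamming intervals are coordinatewise: a point between `x` and `z` agrees with them
wherever they agree. -/
theorem apply_eq_of_hammingDist_add_eq {ι : Type*} [Fintype ι] {β : ι → Type*}
    [∀ i, DecidableEq (β i)] {x y z : ∀ i, β i}
    (h : hammingDist x y + hammingDist y z = hammingDist x z) {i : ι} (hi : x i = z i) :
    x i = y i := by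
  simp only [hammingDist, Finset.card_filter, ← Finset.sum_add_distrib] at h
  have hle : ∀ j ∈ Finset.univ, (if x j ≠ z j then 1 else 0) ≤
      (if x j ≠ y j then 1 else 0) + (if y j ≠ z j then 1 else 0) := by
    intro j _
    grind
  have hj := (Finset.sum_eq_sum_iff_of_le hle).1 h.symm i (Finset.mem_univ i)
  by_contra hne
  grind

/-- Vertices that agree in coordinate `i` stay connected after removing the `i`-th class. -/
theorem reachable_deleteEdges_coordCut {V : Type*} {G : SimpleGraph V} (hconn : G.Connected)
    {d : ℕ} {φ : V → Fin d → Bool} (hφ : ∀ u v : V, G.dist u v = hammingDist (φ u) (φ v))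
    {i : Fin d} {u v : V} (huv : φ u i = φ v i) :
    (G.deleteEdges (coordCut G φ i)).Reachable u v := by
  obtain ⟨p, hp⟩ := (hconn u v).exists_walk_length_eq_dist
  induction p with
  | nil => exact .rfl
  | @cons u w v huw p ih =>
    rw [SimpleGraph.Walk.length_cons] at hp
    have huw_dist : G.dist u w = 1 := SimpleGraph.dist_eq_one_iff_adj.2 huw
    have hle : G.dist w v ≤ p.length := SimpleGraph.dist_le p
    have htri : G.dist u v ≤ G.dist u w + G.dist w v := hconn.dist_triangle
    have hw : φ u i = φ w i :=
      apply_eq_of_hammingDist_add_eq (by simp only [← hφ]; omega) huv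
    have hadj : (G.deleteEdges (coordCut G φ i)).Adj u w := by
      rw [SimpleGraph.deleteEdges_adj, mk_mem_coordCut]
      exact ⟨huw, fun h => h.2 hw⟩
    exact hadj.reachable.trans (ih (hw ▸ huv) (by omega))

/-- Coordinate `i` is constant on the components left after removing the `i`-th class. -/
theorem apply_eq_of_reachable_deleteEdges_coordCut {V : Type*} {G : SimpleGraph V} {d : ℕ}
    {φ : V → Fin d → Bool} {i : Fin d} {u v : V}
    (h : (G.deleteEdges (coordCut G φ i)).Reachable u v) : φ u i = φ v i := by
  obtain ⟨p⟩ := h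
  induction p with
  | nil => rfl
  | cons hadj _ ih =>
    rw [SimpleGraph.deleteEdges_adj, mk_mem_coordCut] at hadj
    by_contra hne
    exact hadj.2 ⟨hadj.1, fun h => hne (h.trans ih)⟩

theorem isCut_coordCut {V : Type*} {G : SimpleGraph V} (hconn : G.Connected) {d : ℕ}
    {φ : V → Fin d → Bool} (hφ : ∀ u v : V, G.dist u v = hammingDist (φ u) (φ v)) {i : Fin d}
    (hne : (coordCut G φ i).Nonempty) : IsCut G (coordCut G φ i) := by
  refine ⟨fun e he => he.1, ?_, ?_⟩
  · intro hc
    obtain ⟨e, -, u, w, -, huw⟩ := hne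
    exact huw (apply_eq_of_reachable_deleteEdges_coordCut (hc u w))
  · intro C' hC'
    obtain ⟨e, ⟨he, a, b, rfl, hab⟩, heC'⟩ := Set.exists_of_ssubset hC'
    have hmono := SimpleGraph.deleteEdges_anti (G := G) hC'.subset
    have hadj : (G.deleteEdges C').Adj a b := SimpleGraph.deleteEdges_adj.2 ⟨he, heC'⟩
    have hreach : ∀ x, (G.deleteEdges C').Reachable x a := by
      intro x
      by_cases hx : φ x i = φ a i
      · exact (reachable_deleteEdges_coordCut hconn hφ hx).mono hmono
      · have hxb : φ x i = φ b i := by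
          rw [Bool.eq_not_of_ne hx, Bool.eq_not_of_ne hab, Bool.not_not]
        exact ((reachable_deleteEdges_coordCut hconn hφ hxb).mono hmono).trans
          hadj.symm.reachable
    have := hconn.nonempty
    exact ⟨fun x y => (hreach x).trans (hreach y).symm⟩

/-- Adjacent vertices differ in exactly one coordinate of an isometric embedding. -/
theorem existsUnique_mem_coordCut {V : Type*} {G : SimpleGraph V} {d : ℕ}
    {φ : V → Fin d → Bool} (hφ : ∀ u v : V, G.dist u v = hammingDist (φ u) (φ v))
    {e : Sym2 V} (he : e ∈ G.edgeSet) : ∃! i, e ∈ coordCut G φ i := by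
  induction e with
  | _ u v =>
    have h1 : hammingDist (φ u) (φ v) = 1 := by
      rw [← hφ]
      exact SimpleGraph.dist_eq_one_iff_adj.2 he
    obtain ⟨i, hi⟩ := Finset.card_eq_one.1 h1
    have hiff : ∀ j, φ u j ≠ φ v j ↔ j = i := by
      simpa [Finset.ext_iff] using hi
    exact ⟨i, mk_mem_coordCut.2 ⟨he, (hiff i).2 rfl⟩,
      fun j hj => (hiff j).1 (mk_mem_coordCut.1 hj).2⟩

/-- Given an isometric embedding of a finite connected graph into a hypercube, every
nonempty coordinate edge class is a cut, and these classes form a cut-partition. -/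
theorem coordCut_isCutPartition {V : Type*} [Fintype V] (G : SimpleGraph V)
    (hconn : G.Connected) {d : ℕ} (φ : V → Fin d → Bool)
    (hφ : ∀ u v : V, G.dist u v = hammingDist (φ u) (φ v)) :
    (∀ i : Fin d, (coordCut G φ i).Nonempty → IsCut G (coordCut G φ i)) ∧
    IsCutPartition G {C : Set (Sym2 V) | ∃ i : Fin d,
      (coordCut G φ i).Nonempty ∧ C = coordCut G φ i} := by
  refine ⟨fun i => isCut_coordCut hconn hφ, ?_, ?_, ?_⟩
  · rintro _ ⟨i, hi, rfl⟩
    exact isCut_coordCut hconn hφ hi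
  · rintro _ ⟨i, -, rfl⟩ _ ⟨j, -, rfl⟩ hij
    refine Set.disjoint_left.2 fun e hei hej => hij ?_
    rw [(existsUnique_mem_coordCut hφ hei.1).unique hei hej]
  · ext e
    constructor
    · rintro ⟨_, ⟨i, -, rfl⟩, he⟩
      exact he.1
    · intro he
      obtain ⟨i, hi, -⟩ := existsUnique_mem_coordCut hφ he
      exact ⟨_, ⟨i, ⟨e, hi⟩, rfl⟩, hi⟩
end

section
/- Let 𝒞 be a cut-partition of a finite connected simple graph G such that no shortest path in G uses two edges of the same cut C ∈ 𝒞. Then for every C ∈ 𝒞, both sides C⁺ and C⁻ of C are convex vertex sets of G. -/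
/-- A set of vertices is (geodesically) convex. -/
def GConvex {V : Type*} (G : SimpleGraph V) (S : Set V) : Prop :=
  ∀ u ∈ S, ∀ w ∈ S, ∀ x : V, G.dist u x + G.dist x w = G.dist u w → x ∈ S

/-- A side of a cut `C`: the vertex set of a connected component of `G` minus `C`. -/
def IsSide {V : Type*} (G : SimpleGraph V) (C : Set (Sym2 V)) (S : Set V) : Prop :=
  ∃ x : V, S = {y : V | (G.deleteEdges C).Reachable y x}

/-- A walk between vertices in different components of `G` minus `C` uses an edge of `C`. -/
lemma one_le_cutUse_of_not_reachable {V : Type*} {G : SimpleGraph V} {C : Set (Sym2 V)} {u w : V}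
    (p : G.Walk u w) (h : ¬ (G.deleteEdges C).Reachable u w) : 1 ≤ cutUse G p C := by
  by_contra! hlt
  have hzero : cutUse G p C = 0 := by omega
  refine h ⟨p.toDeleteEdges C fun e he hC => ?_⟩
  simp only [cutUse, List.countP_eq_zero, decide_eq_true_eq] at hzero
  exact hzero e he hC

lemma cutUse_append {V : Type*} {G : SimpleGraph V} {u x w : V} (p : G.Walk u x)
    (q : G.Walk x w) (C : Set (Sym2 V)) :
    cutUse G (p.append q) C = cutUse G p C + cutUse G q C := by
  simp [cutUse, SimpleGraph.Walk.edges_append]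

/-- If no shortest path uses two edges of the same cut of a cut-partition,
then both sides of every cut are convex. -/
theorem sides_gconvex {V : Type*} [Fintype V] (G : SimpleGraph V)
    (hconn : G.Connected) (𝒞 : Set (Set (Sym2 V))) (hpart : IsCutPartition G 𝒞)
    (hgeo : ∀ (u w : V) (p : G.Walk u w), p.length = G.dist u w →
      ∀ C ∈ 𝒞, cutUse G p C ≤ 1) :
    ∀ C ∈ 𝒞, ∀ S : Set V, IsSide G C S → GConvex G S := by
  rintro C hC S ⟨c, rfl⟩ u hu w hw x hx
  by_contra hxc
  obtain ⟨p, hp⟩ := hconn.exists_walk_length_eq_dist u x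
  obtain ⟨q, hq⟩ := hconn.exists_walk_length_eq_dist x w
  have hle := hgeo u w (p.append q) (by rw [SimpleGraph.Walk.length_append, hp, hq, hx]) C hC
  have hp_cut := one_le_cutUse_of_not_reachable (C := C) p fun h => hxc (h.symm.trans hu)
  have hq_cut := one_le_cutUse_of_not_reachable (C := C) q fun h => hxc (h.trans hw)
  rw [cutUse_append] at hle
  omega
end

section
/- Let L be a finite lattice with greatest element ⊤ and let H be a set of atoms of L such that the supremum of H equals ⊤ and no proper subset of H has supremum ⊤. Then the map assigning to each subset S ⊆ H its supremum is injective; in particular 2^{|H|} ≤ |L|. -/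
/-- If no proper subset of `H` has supremum `⊤`, then comparing suprema of subsets of `H`
reflects inclusion. -/
theorem Finset.subset_of_sup_le_sup_of_minimal {L : Type*} [Lattice L] [BoundedOrder L]
    {H S T : Finset L} (hsup : H.sup id = ⊤)
    (hmin : ∀ H' : Finset L, H' ⊂ H → H'.sup id ≠ ⊤) (hS : S ⊆ H) (hT : T ⊆ H)
    (hle : S.sup id ≤ T.sup id) : S ⊆ T := by
  classical
  intro x hxS
  by_contra hxT
  refine hmin (H.erase x) (Finset.erase_ssubset (hS hxS)) ?_
  have hx : x ≤ (H.erase x).sup id :=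
    (Finset.le_sup (f := id) hxS).trans
      (hle.trans (Finset.sup_mono (Finset.subset_erase.2 ⟨hT, hxT⟩)))
  rw [← hsup, ← Finset.insert_erase (hS hxS), Finset.sup_insert,
    Finset.erase_insert (Finset.notMem_erase x H)]
  exact (sup_eq_right.2 hx).symm

/-- In a finite lattice, if `H` is a set of atoms whose supremum is `⊤` while no
proper subset of `H` has supremum `⊤`, then distinct subsets of `H` have distinct
suprema; in particular `2 ^ |H| ≤ |L|`. -/
theorem sup_injective_of_minimal_atom_set {L : Type*} [Fintype L] [Lattice L]
    [BoundedOrder L] (H : Finset L) (hatoms : ∀ a ∈ H, IsAtom a)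
    (hsup : H.sup id = ⊤) (hmin : ∀ H' : Finset L, H' ⊂ H → H'.sup id ≠ ⊤) :
    (∀ S T : Finset L, S ⊆ H → T ⊆ H → S.sup id = T.sup id → S = T) ∧
      2 ^ H.card ≤ Fintype.card L := by
  have hinj : ∀ S T : Finset L, S ⊆ H → T ⊆ H → S.sup id = T.sup id → S = T :=
    fun S T hS hT h =>
      (Finset.subset_of_sup_le_sup_of_minimal hsup hmin hS hT h.le).antisymm
        (Finset.subset_of_sup_le_sup_of_minimal hsup hmin hT hS h.ge)
  refine ⟨hinj, ?_⟩
  rw [← Finset.card_powerset, ← Finset.card_univ]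
  exact Finset.card_le_card_of_injOn (fun S => S.sup id) (fun _ _ => Finset.mem_univ _)
    fun S hS T hT h => hinj S T (Finset.mem_powerset.1 hS) (Finset.mem_powerset.1 hT) h
end

section
/- Let L be a finite atomistic lattice, i.e., every element of L is the supremum of the atoms below it. Then there exists a set H of atoms of L with supremum equal to the greatest element ⊤ and 2^{|H|} ≤ |L|; in particular, the minimum size of a set of atoms whose supremum is ⊤ is at most log₂ |L|. -/
/-- If no element of `H` can be erased without changing the supremum, then distinct subsets of `H`
have distinct suprema, so the semilattice has at least `2 ^ |H|` elements. -/
theorem two_pow_card_le_of_sup_erase_ne {L : Type*} [Fintype L] [DecidableEq L]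
    [SemilatticeSup L] [OrderBot L] {H : Finset L}
    (hH : ∀ a ∈ H, (H.erase a).sup id ≠ H.sup id) :
    2 ^ H.card ≤ Fintype.card L := by
  have subset_of_sup_le : ∀ S ⊆ H, ∀ T ⊆ H, S.sup id ≤ T.sup id → S ⊆ T := by
    intro S hS T hT hle a haS
    by_contra haT
    refine hH a (hS haS) (le_antisymm (Finset.sup_mono (Finset.erase_subset a H)) ?_)
    have hT' : T.sup id ≤ (H.erase a).sup id :=
      Finset.sup_mono (Finset.subset_erase.2 ⟨hT, haT⟩)
    refine Finset.sup_le fun b hb => ?_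
    by_cases hba : b = a
    · subst hba
      exact (Finset.le_sup (f := id) haS).trans (hle.trans hT')
    · exact Finset.le_sup (f := id) (Finset.mem_erase.2 ⟨hba, hb⟩)
  rw [← Finset.card_powerset, ← Finset.card_univ]
  refine Finset.card_le_card_of_injOn (fun S => S.sup id) (fun _ _ => Finset.mem_univ _) ?_
  intro S hS T hT hST
  have hS' := Finset.mem_powerset.1 hS
  have hT' := Finset.mem_powerset.1 hT
  exact (subset_of_sup_le S hS' T hT' hST.le).antisymm (subset_of_sup_le T hT' S hS' hST.ge)

open Classical in
/-- In a finite atomistic lattice `L` there is a set `H` of atoms with supremum `⊤`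
and `2 ^ |H| ≤ |L|`; in particular the minimum size of a set of atoms whose
supremum is `⊤` is at most `log₂ |L|`. -/
theorem exists_atom_set_sup_top_card_le {L : Type*} [Fintype L] [Lattice L]
    [BoundedOrder L]
    (hatomistic : ∀ x : L,
      ((Finset.univ : Finset L).filter fun a => IsAtom a ∧ a ≤ x).sup id = x) :
    (∃ H : Finset L, (∀ a ∈ H, IsAtom a) ∧ H.sup id = ⊤ ∧
        2 ^ H.card ≤ Fintype.card L) ∧
      sInf {n : ℕ | ∃ H : Finset L, (∀ a ∈ H, IsAtom a) ∧ H.sup id = ⊤ ∧ H.card = n} ≤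
        Nat.log 2 (Fintype.card L) := by
  have hne : {n : ℕ | ∃ H : Finset L,
      (∀ a ∈ H, IsAtom a) ∧ H.sup id = ⊤ ∧ H.card = n}.Nonempty :=
    ⟨_, _, fun a ha => (Finset.mem_filter.1 ha).2.1, hatomistic ⊤, rfl⟩
  obtain ⟨H, hatom, hsup, hcard⟩ := Nat.sInf_mem hne
  have hpow : 2 ^ H.card ≤ Fintype.card L := by
    refine two_pow_card_le_of_sup_erase_ne fun a ha heq => ?_
    have hmin := Nat.sInf_le (s := {n : ℕ | ∃ H : Finset L,
        (∀ a ∈ H, IsAtom a) ∧ H.sup id = ⊤ ∧ H.card = n})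
      ⟨H.erase a, fun b hb => hatom b (Finset.mem_of_mem_erase hb), heq.trans hsup, rfl⟩
    rw [← hcard] at hmin
    exact absurd (Finset.card_erase_lt_of_mem ha) hmin.not_gt
  exact ⟨⟨H, hatom, hsup, hpow⟩, hcard ▸ Nat.le_log_of_pow_le one_lt_two hpow⟩
end

section
/- Let G be a finite partial cube, v a vertex of G, and let 𝓛_G^v be the lattice of convex vertex sets of G containing v, ordered by inclusion. For G', G'' ∈ 𝓛_G^v, the element G'' covers G' in 𝓛_G^v if and only if there exists a vertex u ∈ G'' \ G' such that G'' = conv(G' ∪ {u}) and u is adjacent in G to some vertex w ∈ G'. -/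
/-- The convex hull of a set of vertices: the smallest convex set containing it. -/
def GConvexHull {V : Type*} (G : SimpleGraph V) (S : Set V) : Set V :=
  ⋂₀ {T : Set V | GConvex G T ∧ S ⊆ T}

/-- Membership in the lattice `𝓛_G^v` of convex vertex sets of `G` containing `v`. -/
def ConvCont {V : Type*} (G : SimpleGraph V) (v : V) (S : Set V) : Prop :=
  GConvex G S ∧ v ∈ S

/-- `B` covers `A` in the inclusion order `𝓛_G^v` on convex sets containing `v`. -/
def CoversIn {V : Type*} (G : SimpleGraph V) (v : V) (A B : Set V) : Prop :=
  A ⊂ B ∧ ∀ T : Set V, ConvCont G v T → A ⊂ T → T ⊂ B → False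

/-- The Hamming distance as a sum of coordinatewise contributions. -/
lemma hammingDist_eq_sum_ite {d : ℕ} (x y : Fin d → Bool) :
    hammingDist x y = ∑ i, if x i = y i then 0 else 1 := by
  simp [hammingDist, Finset.card_filter]

/-- Coordinates on which both ends agree are constant along geodesics of the hypercube. -/
lemma apply_eq_of_hammingDist_add_eq_s14 {d : ℕ} {x y z : Fin d → Bool} {j : Fin d}
    (h : hammingDist x y + hammingDist y z = hammingDist x z) (hxz : x j = z j) :
    y j = x j := by
  by_contra hne
  refine absurd h (ne_of_gt ?_)
  simp only [hammingDist_eq_sum_ite, ← Finset.sum_add_distrib]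
  refine Finset.sum_lt_sum (fun i _ => ?_) ⟨j, Finset.mem_univ j, ?_⟩ <;> grind

/-- Adjacent hypercube vertices differ in exactly one coordinate. -/
lemma exists_ne_and_eq_of_hammingDist_eq_one {d : ℕ} {x y : Fin d → Bool}
    (h : hammingDist x y = 1) : ∃ i, x i ≠ y i ∧ ∀ j, j ≠ i → x j = y j := by
  obtain ⟨i, hi⟩ := Finset.card_eq_one.mp h
  have hmem : ∀ j, x j ≠ y j ↔ j = i := fun j => by
    simpa using Finset.ext_iff.mp hi j
  exact ⟨i, (hmem i).2 rfl, fun j hj => by_contra fun hne => hj ((hmem j).1 hne)⟩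

/-- If `x` and `y` differ only in coordinate `i`, then `y` lies between `x` and any `z` that
differs from `x` at `i`. -/
lemma hammingDist_add_eq_of_eq_off {d : ℕ} {x y z : Fin d → Bool} {i : Fin d}
    (hxy : x i ≠ y i) (hoff : ∀ j, j ≠ i → x j = y j) (hz : z i ≠ x i) :
    hammingDist x y + hammingDist y z = hammingDist x z := by
  have hzy : z i = y i := (Bool.eq_not_of_ne hz).trans (Bool.eq_not_of_ne hxy.symm).symm
  simp only [hammingDist_eq_sum_ite, ← Finset.sum_add_distrib]
  refine Finset.sum_congr rfl fun j _ => ?_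
  by_cases hj : j = i
  · subst hj; simp [hzy]
  · simp [hoff j hj]

lemma gConvex_gConvexHull {V : Type*} (G : SimpleGraph V) (S : Set V) :
    GConvex G (GConvexHull G S) := fun u hu w hw x hx T hT =>
  hT.1 u (hu T hT) w (hw T hT) x hx

lemma subset_gConvexHull {V : Type*} (G : SimpleGraph V) (S : Set V) :
    S ⊆ GConvexHull G S := fun _ hx _ hT => hT.2 hx

lemma gConvexHull_subset {V : Type*} {G : SimpleGraph V} {S T : Set V}
    (hT : GConvex G T) (hST : S ⊆ T) : GConvexHull G S ⊆ T := fun _ hx => hx T ⟨hT, hST⟩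

/-- The halfspaces cut out by the coordinates of an isometric hypercube embedding are convex. -/
lemma gConvex_setOf_apply_eq {V : Type*} {G : SimpleGraph V} {d : ℕ} {φ : V → Fin d → Bool}
    (hφ : ∀ u v : V, G.dist u v = hammingDist (φ u) (φ v)) (j : Fin d) (c : Bool) :
    GConvex G {z | φ z j = c} := by
  intro u hu w hw x hx
  simp only [hφ] at hx
  exact (apply_eq_of_hammingDist_add_eq_s14 hx (hu.trans hw.symm)).trans hu

/-- A convex set meeting `A` but not contained in it contains an edge leaving `A`. -/
lemma GConvex.exists_adj_of_mem_of_notMem {V : Type*} {G : SimpleGraph V} (hconn : G.Connected)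
    {A T : Set V} (hT : GConvex G T) {a t : V} (ha : a ∈ A) (haT : a ∈ T) (ht : t ∈ T)
    (htA : t ∉ A) : ∃ x ∈ A, ∃ y ∈ T \ A, G.Adj y x := by
  obtain ⟨p, hp⟩ := hconn.exists_walk_length_eq_dist a t
  induction p with
  | nil => exact absurd ha htA
  | @cons a b t hab q ih =>
    rw [SimpleGraph.Walk.length_cons] at hp
    have hq := SimpleGraph.dist_le q
    have htri := hconn.dist_triangle (u := a) (v := b) (w := t)
    have hone : G.dist a b = 1 := SimpleGraph.dist_eq_one_iff_adj.mpr hab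
    have hbT : b ∈ T := hT a haT t ht b (by omega)
    by_cases hb : b ∈ A
    · exact ih hb hbT ht htA (by omega)
    · exact ⟨a, ha, b, ⟨hbT, hb⟩, hab.symm⟩

/-- An edge leaving a convex set `A` determines a coordinate that is constant on `A`. -/
lemma GConvex.exists_coord_of_adj {V : Type*} {G : SimpleGraph V} {d : ℕ} {φ : V → Fin d → Bool}
    (hφ : ∀ u v : V, G.dist u v = hammingDist (φ u) (φ v)) {A : Set V} (hA : GConvex G A)
    {u w : V} (hw : w ∈ A) (hu : u ∉ A) (huw : G.Adj u w) :
    ∃ i, φ w i ≠ φ u i ∧ (∀ j, j ≠ i → φ w j = φ u j) ∧ ∀ a ∈ A, φ a i = φ w i := by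
  have hone : hammingDist (φ w) (φ u) = 1 := by
    rw [← hφ]; exact SimpleGraph.dist_eq_one_iff_adj.mpr huw.symm
  obtain ⟨i, hne, hoff⟩ := exists_ne_and_eq_of_hammingDist_eq_one hone
  refine ⟨i, hne, hoff, fun a ha => by_contra fun hai => hu (hA w hw a ha u ?_)⟩
  simp only [hφ]
  exact hammingDist_add_eq_of_eq_off hne hoff hai

/-- In a finite partial cube `G`, for convex sets `A ⊆ B` containing `v`, `B` covers `A`
in `𝓛_G^v` iff `B` is the convex hull of `A` together with a single vertex `u ∈ B \ A`
adjacent to some vertex of `A`. -/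
theorem coversIn_iff_convexHull_insert {V : Type*} [Fintype V] (G : SimpleGraph V)
    (hconn : G.Connected) (hpc : IsPartialCube G) (v : V) (A B : Set V)
    (hA : ConvCont G v A) (hB : ConvCont G v B) :
    CoversIn G v A B ↔
      ∃ u ∈ B \ A, B = GConvexHull G (A ∪ {u}) ∧ ∃ w ∈ A, G.Adj u w := by
  constructor
  · rintro ⟨hAB, hcov⟩
    obtain ⟨t, htB, htA⟩ := Set.exists_of_ssubset hAB
    obtain ⟨w, hw, u, hu, huw⟩ :=
      hB.1.exists_adj_of_mem_of_notMem hconn hA.2 hB.2 htB htA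
    refine ⟨u, hu, ?_, w, hw, huw⟩
    have hsub : GConvexHull G (A ∪ {u}) ⊆ B :=
      gConvexHull_subset hB.1 (Set.union_subset hAB.1 (Set.singleton_subset_iff.mpr hu.1))
    have hA' : A ⊆ GConvexHull G (A ∪ {u}) :=
      Set.subset_union_left.trans (subset_gConvexHull G _)
    have hu' : u ∈ GConvexHull G (A ∪ {u}) := subset_gConvexHull G _ (Or.inr rfl)
    by_contra hne
    exact hcov _ ⟨gConvex_gConvexHull G _, hA' hA.2⟩ ⟨hA', fun h => hu.2 (h hu')⟩
      (hsub.ssubset_of_ne (Ne.symm hne))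
  · rintro ⟨u, ⟨huB, huA⟩, hBeq, w, hw, huw⟩
    obtain ⟨d, φ, hφ⟩ := hpc
    have hAB : A ⊆ B := by
      rw [hBeq]; exact Set.subset_union_left.trans (subset_gConvexHull G _)
    refine ⟨⟨hAB, fun h => huA (h huB)⟩, fun T hT hAT hTB => hTB.2 ?_⟩
    suffices huT : u ∈ T by
      rw [hBeq]
      exact gConvexHull_subset hT.1
        (Set.union_subset hAT.1 (Set.singleton_subset_iff.mpr huT))
    obtain ⟨t, htT, htA⟩ := Set.exists_of_ssubset hAT
    obtain ⟨x, hx, y, ⟨hyT, hyA⟩, hyx⟩ :=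
      hT.1.exists_adj_of_mem_of_notMem hconn hA.2 hT.2 htT htA
    obtain ⟨i, hine, hioff, hiA⟩ := hA.1.exists_coord_of_adj hφ hw huA huw
    obtain ⟨j, hjne, -, hjA⟩ := hA.1.exists_coord_of_adj hφ hx hyA hyx
    have hji : j = i := by
      by_contra hji
      have hsub : B ⊆ {z | φ z j = φ x j} := by
        rw [hBeq]
        refine gConvexHull_subset (gConvex_setOf_apply_eq hφ j _)
          (Set.union_subset hjA (Set.singleton_subset_iff.mpr ?_))
        exact (hioff j hji).symm.trans (hjA w hw)
      exact hjne (hsub (hTB.1 hyT)).symm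
    subst hji
    refine hT.1 w (hAT.1 hw) y hyT u ?_
    simp only [hφ]
    exact hammingDist_add_eq_of_eq_off hine hioff (hiA x hx ▸ hjne.symm)
end

section
/- Let G be a finite partial cube and v a vertex of G. Then the lattice 𝓛_G^v of convex vertex sets of G containing v, ordered by inclusion, is upper locally distributive: every element of 𝓛_G^v has a unique inclusion-minimal set M of meet-irreducible elements of 𝓛_G^v whose meet (intersection) equals it. -/
/-- An element of `𝓛_G^v` is meet-irreducible if it is covered by exactly one element. -/
def MeetIrredIn {V : Type*} (G : SimpleGraph V) (v : V) (m : Set V) : Prop :=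
  ConvCont G v m ∧ ∃! m' : Set V, ConvCont G v m' ∧ CoversIn G v m m'

/-- Equality in the triangle inequality for the Hamming distance. -/
theorem hammingDist_add_eq_iff {ι : Type*} [Fintype ι] {β : ι → Type*} [∀ i, DecidableEq (β i)]
    (u x w : ∀ i, β i) :
    hammingDist u x + hammingDist x w = hammingDist u w ↔ ∀ i, x i = u i ∨ x i = w i := by
  simp only [hammingDist, Finset.card_filter, ← Finset.sum_add_distrib]
  rw [eq_comm, Finset.sum_eq_sum_iff_of_le]
  · refine ⟨fun h i => ?_, fun h i _ => ?_⟩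
    · have := h i (Finset.mem_univ i)
      grind
    · have := h i
      grind
  · intro i _
    grind

section Isometry

variable {V : Type*} {G : SimpleGraph V} {d : ℕ} {φ : V → Fin d → Bool} {v : V}

/-- The vertices agreeing with `v` in the coordinate `i` of the embedding `φ`. -/
def cubeHalf (φ : V → Fin d → Bool) (v : V) (i : Fin d) : Set V :=
  {x | φ x i = φ v i}

/-- The edge `yz` leaves `S` from `y` to `z` and flips exactly the coordinate `i`. -/
def LeavesAlong (G : SimpleGraph V) (φ : V → Fin d → Bool) (S : Set V) (i : Fin d)
    (y z : V) : Prop :=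
  y ∈ S ∧ z ∉ S ∧ G.Adj y z ∧ φ y i ≠ φ z i ∧ ∀ j, j ≠ i → φ y j = φ z j

theorem dist_add_eq_iff_coord (hφ : ∀ u w, G.dist u w = hammingDist (φ u) (φ w)) (u x w : V) :
    G.dist u x + G.dist x w = G.dist u w ↔ ∀ i, φ x i = φ u i ∨ φ x i = φ w i := by
  rw [hφ, hφ, hφ, hammingDist_add_eq_iff]

theorem exists_unique_flip (hφ : ∀ u w, G.dist u w = hammingDist (φ u) (φ w)) {y z : V}
    (h : G.Adj y z) : ∃ i, φ y i ≠ φ z i ∧ ∀ j, j ≠ i → φ y j = φ z j := by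
  have h1 : hammingDist (φ y) (φ z) = 1 := by
    rw [← hφ, SimpleGraph.dist_eq_one_iff_adj]
    exact h
  obtain ⟨i, hi⟩ := Finset.card_eq_one.mp h1
  simp only [Finset.ext_iff, Finset.mem_filter, Finset.mem_univ, true_and,
    Finset.mem_singleton] at hi
  exact ⟨i, (hi i).2 rfl, fun j hj => not_not.mp fun hne => hj ((hi j).1 hne)⟩

theorem convCont_cubeHalf (hφ : ∀ u w, G.dist u w = hammingDist (φ u) (φ w)) (v : V)
    (i : Fin d) : ConvCont G v (cubeHalf φ v i) := by
  refine ⟨fun u hu w hw x hx => ?_, rfl⟩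
  rcases (dist_add_eq_iff_coord hφ u x w).1 hx i with h | h
  · exact h.trans hu
  · exact h.trans hw

/-- A convex set lies on one side of every edge that leaves it. -/
theorem LeavesAlong.subset_cubeHalf (hφ : ∀ u w, G.dist u w = hammingDist (φ u) (φ w))
    {S : Set V} (hS : ConvCont G v S) {i : Fin d} {y z : V} (h : LeavesAlong G φ S i y z) :
    S ⊆ cubeHalf φ v i := by
  obtain ⟨hy, hz, -, hi, hj⟩ := h
  have key : ∀ s ∈ S, φ s i = φ y i := by
    intro s hs
    by_contra hne
    refine hz (hS.1 s hs y hy z ((dist_add_eq_iff_coord hφ s z y).2 fun j => ?_))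
    by_cases hji : j = i
    · subst hji
      left
      revert hne hi
      cases φ s j <;> cases φ y j <;> cases φ z j <;> simp
    · exact Or.inr (hj j hji).symm
  exact fun s hs => (key s hs).trans (key v hS.2).symm

/-- A vertex outside a convex set is separated from it by the half of some leaving edge. -/
theorem exists_leavesAlong_notMem (hconn : G.Connected)
    (hφ : ∀ u w, G.dist u w = hammingDist (φ u) (φ w))
    {S : Set V} (hS : ConvCont G v S) {x : V} (hx : x ∉ S) :
    ∃ i y z, LeavesAlong G φ S i y z ∧ x ∉ cubeHalf φ v i := by
  classical
  have hex : ∃ n, ∃ y ∈ S, G.dist y x = n := ⟨_, v, hS.2, rfl⟩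
  obtain ⟨y, hy, hyn⟩ := Nat.find_spec hex
  have hmin : ∀ s ∈ S, G.dist y x ≤ G.dist s x := fun s hs =>
    hyn ▸ Nat.find_min' hex ⟨s, hs, rfl⟩
  obtain ⟨p, hp⟩ := (hconn y x).exists_walk_length_eq_dist
  cases p with
  | nil => exact absurd hy hx
  | @cons _ z _ hyz q =>
    have hq : G.dist z x ≤ q.length := SimpleGraph.dist_le q
    have htri : G.dist y x ≤ G.dist y z + G.dist z x := hconn.dist_triangle
    have h1 : G.dist y z = 1 := SimpleGraph.dist_eq_one_iff_adj.2 hyz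
    rw [SimpleGraph.Walk.length_cons] at hp
    have hz : z ∉ S := fun hz => by
      have := hmin z hz
      omega
    obtain ⟨i, hi, hj⟩ := exists_unique_flip hφ hyz
    have hl : LeavesAlong G φ S i y z := ⟨hy, hz, hyz, hi, hj⟩
    refine ⟨i, y, z, hl, fun hxi => ?_⟩
    have hyi : φ y i = φ v i := hl.subset_cubeHalf hφ hS hy
    have hxi : φ x i = φ v i := hxi
    rcases (dist_add_eq_iff_coord hφ y z x).1 (by omega) i with h | h
    · exact hi h.symm
    · exact hi (by rw [h, hxi, hyi])

/-- A half containing the inner but not the outer end of a leaving edge is the half of that edge. -/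
theorem LeavesAlong.eq_of_notMem_cubeHalf {S : Set V} {i j : Fin d} {y z : V}
    (h : LeavesAlong G φ S i y z) (hy : y ∈ cubeHalf φ v j) (hz : z ∉ cubeHalf φ v j) :
    j = i := by
  by_contra hne
  exact hz ((h.2.2.2.2 j hne).symm.trans hy)

theorem ConvCont.sInter {F : Set (Set V)} (hF : ∀ T ∈ F, ConvCont G v T) :
    ConvCont G v (⋂₀ F) :=
  ⟨fun u hu w hw x hx T hT => (hF T hT).1 u (hu T hT) w (hw T hT) x hx,
    fun T hT => (hF T hT).2⟩

/-- The half of an edge leaving a convex set is meet-irreducible: all convex sets strictly above it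
contain the outer end of that edge. -/
theorem LeavesAlong.meetIrredIn_cubeHalf (hφ : ∀ u w, G.dist u w = hammingDist (φ u) (φ w))
    {S : Set V} (hS : ConvCont G v S) {i : Fin d} {y z : V} (h : LeavesAlong G φ S i y z) :
    MeetIrredIn G v (cubeHalf φ v i) := by
  have hy : y ∈ cubeHalf φ v i := h.subset_cubeHalf hφ hS h.1
  have hz : z ∉ cubeHalf φ v i := fun hz => h.2.2.2.1 (Eq.trans hy (Eq.symm hz))
  have habove : ∀ T, ConvCont G v T → cubeHalf φ v i ⊂ T → z ∈ T := by
    intro T hT hlt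
    by_contra hzT
    have hl : LeavesAlong G φ T i y z := ⟨hlt.1 hy, hzT, h.2.2⟩
    exact hlt.2 (hl.subset_cubeHalf hφ hT)
  set F : Set (Set V) := {T | ConvCont G v T ∧ cubeHalf φ v i ⊂ T}
  have hF : ConvCont G v (⋂₀ F) := ConvCont.sInter fun T hT => hT.1
  have hlt : cubeHalf φ v i ⊂ ⋂₀ F :=
    ⟨fun x hx T hT => hT.2.1 hx, fun hle => hz (hle fun T hT => habove T hT.1 hT.2)⟩
  refine ⟨convCont_cubeHalf hφ v i, ⋂₀ F, ⟨hF, hlt, fun T hT h1 h2 => ?_⟩, ?_⟩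
  · exact h2.2 (Set.sInter_subset_of_mem ⟨hT, h1⟩)
  · rintro T ⟨hT, hcov, hbetween⟩
    have hle : ⋂₀ F ⊆ T := Set.sInter_subset_of_mem ⟨hT, hcov⟩
    by_contra hne
    exact hbetween _ hF hlt (hle.ssubset_of_ne (Ne.symm hne))

theorem exists_coversIn_subset [Finite V] {S T : Set V} (hT : ConvCont G v T) (hlt : S ⊂ T) :
    ∃ B, ConvCont G v B ∧ CoversIn G v S B ∧ B ⊆ T := by
  obtain ⟨B, hBT, hB⟩ := (Set.toFinite {B | ConvCont G v B ∧ S ⊂ B}).exists_le_minimal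
    (show T ∈ {B | ConvCont G v B ∧ S ⊂ B} from ⟨hT, hlt⟩)
  exact ⟨B, hB.prop.1, ⟨hB.prop.2, fun C hC h1 h2 => h2.2 (hB.le_of_le ⟨hC, h1⟩ h2.1)⟩, hBT⟩

theorem MeetIrredIn.exists_eq_cubeHalf [Finite V] (hconn : G.Connected)
    (hφ : ∀ u w, G.dist u w = hammingDist (φ u) (φ w)) {m : Set V} (hm : MeetIrredIn G v m) :
    ∃ i, m = cubeHalf φ v i := by
  obtain ⟨hmc, B, ⟨-, hcov, -⟩, huniq⟩ := hm
  obtain ⟨x, hxB, hxm⟩ := Set.exists_of_ssubset hcov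
  obtain ⟨i, y, z, hl, hxi⟩ := exists_leavesAlong_notMem hconn hφ hmc hxm
  refine ⟨i, ?_⟩
  by_contra hne
  obtain ⟨C, hC, hmC, hCi⟩ := exists_coversIn_subset (convCont_cubeHalf hφ v i)
    ((hl.subset_cubeHalf hφ hmc).ssubset_of_ne hne)
  exact hxi (hCi (huniq C ⟨hC, hmC⟩ ▸ hxB))

/-- The halves of edges leaving `S` occur in every representation of `S` as a meet of
meet-irreducibles. -/
theorem LeavesAlong.cubeHalf_mem [Finite V] (hconn : G.Connected)
    (hφ : ∀ u w, G.dist u w = hammingDist (φ u) (φ w)) {S : Set V} {i : Fin d} {y z : V}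
    (h : LeavesAlong G φ S i y z) {M : Set (Set V)} (hM : ∀ m ∈ M, MeetIrredIn G v m)
    (hMS : ⋂₀ M = S) : cubeHalf φ v i ∈ M := by
  subst hMS
  obtain ⟨m, hmM, hzm⟩ : ∃ m ∈ M, z ∉ m := by simpa using h.2.1
  obtain ⟨j, rfl⟩ := (hM m hmM).exists_eq_cubeHalf hconn hφ
  exact h.eq_of_notMem_cubeHalf (h.1 _ hmM) hzm ▸ hmM

end Isometry

/-- For a finite partial cube `G` and a vertex `v`, the lattice `𝓛_G^v` of convex sets
containing `v` is upper locally distributive: every element has a unique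
inclusion-minimal set of meet-irreducible elements whose meet (intersection) equals it. -/
theorem latticeConvexSets_uld {V : Type*} [Fintype V] (G : SimpleGraph V)
    (hconn : G.Connected) (hpc : IsPartialCube G) (v : V) :
    ∀ S : Set V, ConvCont G v S →
      ∃! M : Set (Set V), (∀ m ∈ M, MeetIrredIn G v m) ∧ ⋂₀ M = S ∧
        ∀ M' : Set (Set V), M' ⊂ M → ⋂₀ M' ≠ S := by
  intro S hS
  obtain ⟨d, φ, hφ⟩ := hpc
  set M : Set (Set V) := {m | ∃ i y z, LeavesAlong G φ S i y z ∧ m = cubeHalf φ v i}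
  have hirr : ∀ m ∈ M, MeetIrredIn G v m := by
    rintro m ⟨i, y, z, hl, rfl⟩
    exact hl.meetIrredIn_cubeHalf hφ hS
  have hmeet : ⋂₀ M = S := by
    refine subset_antisymm (fun x hx => ?_) ?_
    · by_contra hxS
      obtain ⟨i, y, z, hl, hxi⟩ := exists_leavesAlong_notMem hconn hφ hS hxS
      exact hxi (hx _ ⟨i, y, z, hl, rfl⟩)
    · rintro s hs m ⟨i, y, z, hl, rfl⟩
      exact hl.subset_cubeHalf hφ hS hs
  have hleast : ∀ N : Set (Set V), (∀ m ∈ N, MeetIrredIn G v m) → ⋂₀ N = S → M ⊆ N := by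
    rintro N hN hNS m ⟨i, y, z, hl, rfl⟩
    exact hl.cubeHalf_mem hconn hφ hN hNS
  refine ⟨M, ⟨hirr, hmeet, fun N hN hNS => ?_⟩, ?_⟩
  · exact hN.2 (hleast N (fun m hm => hirr m (hN.1 hm)) hNS)
  · rintro N ⟨hN, hNS, hmin⟩
    by_contra hne
    exact hmin M ((hleast N hN hNS).ssubset_of_ne (Ne.symm hne)) hmeet
end
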